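/- Assume a ≠ 0 and let A* = {q·2π/(K·T) : q = 1, 2, …, K−1}. Then for every α ∈ A*, L(α·T/2) = |c2/(c1·sin(α·T/2))|, and the set of minimizers of the map α ↦ L(α·T/2) over A* equals the set of minimizers of the map α ↦ |α·T/2 − π/2| over A*. -/

import Mathlib

open Real

/-- `J(x,y) = Σ_{k=0}^{K−1} (b + a·k·T)·cos(y − 2xk)`. -/
noncomputable def Jfun (K : ℕ) (T b a x y : ℝ) : ℝ :=
  ∑ k ∈ Finset.range K, (b + a * k * T) * Real.cos (y - 2 * x * k)

/-- The loss function `L(x) = −inf_{y ∈ [0,2π)} J(x,y)/(c1·K)`, with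
`c1 = b + a·T·(K−1)/2`. -/
noncomputable def Lfun (K : ℕ) (T b a x : ℝ) : ℝ :=
  -sInf ((fun y => Jfun K T b a x y) '' Set.Ico 0 (2 * π)) /
    ((b + a * T * ((K : ℝ) - 1) / 2) * K)

/-- `f1(x) = sin(Kx)/sin(x)`. -/
noncomputable def f1 (K : ℕ) (x : ℝ) : ℝ := Real.sin (K * x) / Real.sin x

/-- `f2(x) = K·cos(Kx)/sin(x) − sin(Kx)·cos(x)/sin(x)²`. -/
noncomputable def f2 (K : ℕ) (x : ℝ) : ℝ :=
  (K : ℝ) * Real.cos (K * x) / Real.sin x -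
    Real.sin (K * x) * Real.cos x / (Real.sin x) ^ 2

/-- The set `A* = {q·2π/(K·T) : q ∈ ℤ, 1 ≤ q ≤ K−1}`. -/
def Astar (K : ℕ) (T : ℝ) : Set ℝ :=
  {α | ∃ q : ℤ, 1 ≤ q ∧ q ≤ (K : ℤ) - 1 ∧ α = q * (2 * π) / (K * T)}

theorem aux_sum (x y T b a : ℝ) (n : ℕ) :
    4 * sin x ^ 2 * Jfun n T b a x y =
      2 * sin x * b * (sin (y + x) - sin (y - 2 * x * n + x)) +
      a * T * (cos (y - 2 * x * n + 2 * x) - cos (y + 2 * x) -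
        2 * sin x * (sin (y + x) - sin (y - 2 * x * n + x) + n * sin (y - 2 * x * n + x))) := by
  induction n with
  | zero => simp [Jfun]
  | succ n ih =>
    have h : Jfun (n+1) T b a x y = Jfun n T b a x y + (b + a * n * T) * cos (y - 2 * x * n) := by
      simp [Jfun, Finset.sum_range_succ]
    rw [h, mul_add, ih]
    push_cast
    have e1 : y - 2 * x * (n + 1) + x = (y - 2 * x * n) - x := by ring
    have e2 : y - 2 * x * (n + 1) + 2 * x = y - 2 * x * n := by ring
    rw [e1, e2]
    generalize y - 2 * x * n = t
    have hs := sin_sq_add_cos_sq x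
    have hc : cos x ^ 2 = 1 - sin x ^ 2 := by linarith
    rw [sin_sub t x, sin_add t x, cos_add t (2 * x), cos_two_mul, sin_two_mul, hc]
    ring

theorem aux_J (K : ℕ) (T b a x y : ℝ) (q : ℤ) (hx : sin x ≠ 0) (hq : x * K = q * π) :
    Jfun K T b a x y = -(a * T * K / (2 * sin x)) * sin (y + x) := by
  have h := aux_sum x y T b a K
  have e1 : y - 2 * x * K + x = (y + x) - q * (2 * π) := by linear_combination -2 * hq
  have e2 : y - 2 * x * K + 2 * x = (y + 2 * x) - q * (2 * π) := by linear_combination -2 * hq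
  rw [e1, e2, sin_sub_int_mul_two_pi, cos_sub_int_mul_two_pi] at h
  have h2 : (4 * sin x ^ 2) ≠ 0 := by positivity
  apply mul_left_cancel₀ h2
  rw [h]
  field_simp
  ring

theorem aux_inf (c x : ℝ) :
    sInf ((fun y => -c * sin (y + x)) '' Set.Ico 0 (2 * π)) = -|c| := by
  apply IsLeast.csInf_eq
  constructor
  · have key : ∀ t : ℝ, ∃ y ∈ Set.Ico 0 (2 * π), sin (y + x) = sin t := by
      intro t
      refine ⟨toIcoMod two_pi_pos 0 (t - x), ?_, ?_⟩
      · simpa using toIcoMod_mem_Ico two_pi_pos 0 (t - x)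
      · have : toIcoMod two_pi_pos 0 (t - x) + x
            = t - (toIcoDiv two_pi_pos 0 (t - x) : ℤ) * (2 * π) := by
          rw [toIcoMod, zsmul_eq_mul]; ring
        rw [this, sin_sub_int_mul_two_pi]
    rcases le_total 0 c with h | h
    · obtain ⟨y, hy, e⟩ := key (π / 2)
      refine ⟨y, hy, ?_⟩
      simp only [e, sin_pi_div_two, abs_of_nonneg h]; ring
    · obtain ⟨y, hy, e⟩ := key (-(π / 2))
      refine ⟨y, hy, ?_⟩
      simp only [e, sin_neg, sin_pi_div_two, abs_of_nonpos h]; ring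
  · rintro _ ⟨y, -, rfl⟩
    have h1 : |c * sin (y + x)| ≤ |c| := by
      rw [abs_mul]
      exact mul_le_of_le_one_right (abs_nonneg _) (abs_sin_le_one _)
    have := le_abs_self (c * sin (y + x))
    simp only
    linarith

theorem aux_mem (K : ℕ) (hK : 2 ≤ K) (T : ℝ) (hT : 0 < T) (α : ℝ) (h : α ∈ Astar K T) :
    0 < α * T / 2 ∧ α * T / 2 < π ∧ ∃ q : ℤ, α * T / 2 * K = q * π := by
  obtain ⟨q, h1, h2, rfl⟩ := h
  have hK0 : (0:ℝ) < K := by positivity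
  have e : (q : ℝ) * (2 * π) / (K * T) * T / 2 = q * π / K := by field_simp
  have h1' : (0:ℝ) < q := by exact_mod_cast h1
  have h2' : (q:ℝ) < K := by
    have : q < (K:ℤ) := by omega
    exact_mod_cast this
  rw [e]
  refine ⟨by positivity, ?_, q, by field_simp⟩
  rw [div_lt_iff₀ hK0]
  nlinarith [pi_pos]

theorem aux_c1 (K : ℕ) (hK : 2 ≤ K) (T b a : ℝ) (hb : 0 < b)
    (hpos : ∀ k, k < K → 0 < b + a * k * T) : 0 < b + a * T * ((K : ℝ) - 1) / 2 := by
  have h := hpos (K - 1) (by omega)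
  rw [Nat.cast_sub (by omega)] at h
  push_cast at h
  linarith

theorem aux_sin (u v : ℝ) (hu : 0 < u) (hu' : u < π) (hv : 0 < v) (hv' : v < π) :
    sin v ≤ sin u ↔ |u - π / 2| ≤ |v - π / 2| := by
  have e : ∀ w, sin w = cos |w - π / 2| := by
    intro w; rw [cos_abs, cos_sub_pi_div_two]
  have m : ∀ w, 0 < w → w < π → |w - π / 2| ∈ Set.Icc 0 π := by
    intro w h1 h2
    refine ⟨abs_nonneg _, abs_le.2 ⟨by linarith, by linarith⟩⟩
  rw [e u, e v]
  exact strictAntiOn_cos.le_iff_ge (m v hv hv') (m u hu hu')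

theorem stmt_19 (K : ℕ) (hK : 2 ≤ K) (T b a : ℝ) (hT : 0 < T) (hb : 0 < b)
    (ha : a ≠ 0) (hpos : ∀ k, k < K → 0 < b + a * k * T) :
    (∀ α ∈ Astar K T,
      Lfun K T b a (α * T / 2) =
        |(a * T / 2) / ((b + a * T * ((K : ℝ) - 1) / 2) * Real.sin (α * T / 2))|) ∧
    {α ∈ Astar K T | ∀ β ∈ Astar K T,
        Lfun K T b a (α * T / 2) ≤ Lfun K T b a (β * T / 2)} =
      {α ∈ Astar K T | ∀ β ∈ Astar K T,
        |α * T / 2 - π / 2| ≤ |β * T / 2 - π / 2|} := by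
  have hc1 := aux_c1 K hK T b a hb hpos
  have main : ∀ α ∈ Astar K T,
      Lfun K T b a (α * T / 2) =
        |(a * T / 2) / ((b + a * T * ((K : ℝ) - 1) / 2) * Real.sin (α * T / 2))| := by
    intro α hα
    obtain ⟨h0, hpi, q, hq⟩ := aux_mem K hK T hT α hα
    have hs := sin_pos_of_pos_of_lt_pi h0 hpi
    have hK0 : (0:ℝ) < K := by positivity
    unfold Lfun
    simp only [aux_J K T b a _ _ q hs.ne' hq]
    rw [aux_inf, neg_neg]
    generalize b + a * T * ((K : ℝ) - 1) / 2 = c at *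
    rw [← abs_of_pos (mul_pos hc1 hK0), ← abs_div]
    congr 1
    field_simp
  refine ⟨main, ?_⟩
  ext α
  simp only [Set.mem_ofPred_eq]
  refine and_congr_right fun hα => forall₂_congr fun β hβ => ?_
  rw [main α hα, main β hβ]
  obtain ⟨h0, hpi, -⟩ := aux_mem K hK T hT α hα
  obtain ⟨h0', hpi', -⟩ := aux_mem K hK T hT β hβ
  rw [← aux_sin _ _ h0 hpi h0' hpi']
  have hs := sin_pos_of_pos_of_lt_pi h0 hpi
  have hs' := sin_pos_of_pos_of_lt_pi h0' hpi'
  have hn : 0 < |a * T / 2| := abs_pos.2 (by positivity)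
  rw [abs_div (a * T / 2), abs_div (a * T / 2), abs_of_pos (mul_pos hc1 hs), abs_of_pos (mul_pos hc1 hs'),
    div_le_div_iff_of_pos_left hn (mul_pos hc1 hs) (mul_pos hc1 hs'), mul_le_mul_iff_right₀ hc1]
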